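/- Let 𝔽₄ be the field with four elements, with conjugation x̄ = x², trace Tr(x) = x + x² ∈ 𝔽₂, and symplectic form ω(x,y) = Σⱼ Tr(xⱼ ȳⱼ) on 𝔽₄ⁿ. For an integer m ≥ 3 set δ₂ = 1/18 and δ_m = (3/5)·2^m/((2^m − 2)(2^{m+1} − 2)), and for δ ∈ [δ_m, δ_{m−1}] set R(δ) = 1 − 2/(2^m − 2) − (10/3)·m·δ. Then for every m ≥ 3, every δ ∈ [δ_m, δ_{m−1}], every ε > 0 and every N, there exist n ≥ N and an 𝔽₂-subspace F ⊆ 𝔽₄ⁿ such that: (i) ω(x,y) = 0 for all x, y ∈ F (F is a small symplectic code); (ii) n − dim_{𝔽₂} F ≥ (R(δ) − ε)·n; and (iii) every f ∈ F^ω with f ∉ F has Hamming weight ≥ (δ − ε)·n, where F^ω = {x ∈ 𝔽₄ⁿ : ω(x,y) = 0 for all y ∈ F}. -/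

import Mathlib

open Finset in
/-- The generating-function bound for the volume of a Hamming ball. -/
theorem card_hammingNorm_lt_mul_rpow_le {α : Type*} [Fintype α] [DecidableEq α] [Zero α] (n : ℕ)
    {x : ℝ} (hx0 : 0 < x) (hx1 : x ≤ 1) (t : ℝ) :
    (#{v : Fin n → α | (hammingNorm v : ℝ) < t} : ℝ) * x ^ t
      ≤ (1 + (Fintype.card α - 1) * x) ^ n := by
  have hsum : ∑ a : α, (if a = 0 then (1 : ℝ) else x) = 1 + (Fintype.card α - 1) * x := by
    rw [← Finset.add_sum_erase _ _ (mem_univ (0 : α)), if_pos rfl,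
      Finset.sum_congr rfl fun a ha => if_neg (ne_of_mem_erase ha), Finset.sum_const,
      card_erase_of_mem (mem_univ _), nsmul_eq_mul, card_univ,
      Nat.cast_sub Fintype.card_pos, Nat.cast_one]
  have hprod (v : Fin n → α) :
      ∏ i, (if v i = 0 then (1 : ℝ) else x) = x ^ hammingNorm v := by
    rw [Finset.prod_ite, prod_const_one, one_mul, prod_const]
    rfl
  rw [← hsum, Fintype.sum_pow]
  simp_rw [hprod]
  rw [← nsmul_eq_mul]
  refine (Finset.card_nsmul_le_sum _ (fun v : Fin n → α => x ^ hammingNorm v) _ ?_).trans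
    (sum_le_sum_of_subset_of_nonneg (subset_univ _) fun _ _ _ => by positivity)
  intro v hv
  rw [← Real.rpow_natCast]
  exact Real.rpow_le_rpow_of_exponent_ge hx0 hx1 (mem_filter.1 hv).2.le

namespace LinearMap.BilinForm

open Finset Submodule

variable {V : Type*} [AddCommGroup V] [Module (ZMod 2) V]

/-- Over `𝔽₂`, at most half of the vectors of a finite subspace are orthogonal to a vector that is
not orthogonal to the whole subspace. -/
theorem two_mul_card_isOrtho_le [Fintype V] (B : LinearMap.BilinForm (ZMod 2) V)
    (P : Submodule (ZMod 2) V) {v u₀ : V} (hu₀ : u₀ ∈ P) (hv : B u₀ v ≠ 0)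
    [DecidablePred (· ∈ P)] [DecidablePred fun u => B u v = 0] :
    2 * #{u : V | u ∈ P ∧ B u v = 0} ≤ #{u : V | u ∈ P} := by
  have hle : #{u : V | u ∈ P ∧ B u v = 0} ≤ #{u : V | u ∈ P ∧ ¬ B u v = 0} := by
    refine card_le_card_of_injOn (· + u₀) (fun u hu => ?_) (add_left_injective u₀).injOn
    simp only [coe_filter, mem_univ, true_and, Set.mem_ofPred_eq] at hu ⊢
    exact ⟨P.add_mem hu.1 hu₀, by simpa [hu.2] using hv⟩
  have hsplit := card_filter_add_card_filter_not (s := ({u : V | u ∈ P} : Finset V))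
    (fun u => B u v = 0)
  rw [filter_filter, filter_filter] at hsplit
  omega

open scoped Classical in
/-- An isotropic subspace can be enlarged by at most one dimension so that it stays isotropic and
the number of elements of `S` that are orthogonal to it without lying in it is halved. -/
theorem exists_isotropic_sup_span_singleton [Fintype V]
    {B : LinearMap.BilinForm (ZMod 2) V} (hB : B.IsAlt) (hnd : B.Nondegenerate) (S : Finset V)
    {F : Submodule (ZMod 2) V} (hF : F ≤ B.orthogonal F) :
    ∃ u : V, F ⊔ span (ZMod 2) {u} ≤ B.orthogonal (F ⊔ span (ZMod 2) {u}) ∧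
      2 * {v ∈ S | v ∈ B.orthogonal (F ⊔ span (ZMod 2) {u}) ∧
          v ∉ F ⊔ span (ZMod 2) {u}}.card ≤
        {v ∈ S | v ∈ B.orthogonal F ∧ v ∉ F}.card := by
  set bad : Submodule (ZMod 2) V → Finset V := fun G => {v ∈ S | v ∈ B.orthogonal G ∧ v ∉ G}
    with hbad
  set P := B.orthogonal F
  have hhalf : ∀ v ∈ bad F, 2 * #{u : V | u ∈ P ∧ B u v = 0} ≤ #{u : V | u ∈ P} := by
    intro v hv
    obtain ⟨u₀, hu₀, hne⟩ : ∃ u₀ ∈ P, B u₀ v ≠ 0 := by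
      by_contra! h
      refine (mem_filter.1 hv).2.2 ?_
      rw [← orthogonal_orthogonal hnd hB.isRefl F]
      exact h
    exact two_mul_card_isOrtho_le B P hu₀ hne
  have hmono (u : V) : bad (F ⊔ span (ZMod 2) {u}) ⊆ {v ∈ bad F | B u v = 0} := by
    intro v hv
    simp only [hbad, mem_filter] at hv ⊢
    exact ⟨⟨hv.1, orthogonal_le le_sup_left hv.2.1, fun h => hv.2.2 (le_sup_left (a := F) h)⟩,
      hv.2.1 u (le_sup_right (a := F) (mem_span_singleton_self u))⟩
  have hsum : ∑ u : V with u ∈ P, 2 * #(bad (F ⊔ span (ZMod 2) {u})) ≤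
      ∑ _u : V with _u ∈ P, #(bad F) := by
    calc ∑ u : V with u ∈ P, 2 * #(bad (F ⊔ span (ZMod 2) {u}))
        ≤ ∑ u : V with u ∈ P, 2 * #{v ∈ bad F | B u v = 0} :=
          sum_le_sum fun u _ => Nat.mul_le_mul_left 2 (card_le_card (hmono u))
      _ = ∑ v ∈ bad F, 2 * #{u : V | u ∈ P ∧ B u v = 0} := by
          rw [← mul_sum, ← mul_sum]
          congr 1
          simp_rw [← filter_filter]
          exact sum_card_bipartiteAbove_eq_sum_card_bipartiteBelow _
      _ ≤ ∑ _v ∈ bad F, #{u : V | u ∈ P} := sum_le_sum hhalf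
      _ = ∑ _u : V with _u ∈ P, #(bad F) := by
          rw [sum_const, sum_const, smul_eq_mul, smul_eq_mul, mul_comm]
  obtain ⟨u, hu, hle⟩ := exists_le_of_sum_le ⟨0, by simp⟩ hsum
  refine ⟨u, ?_, hle⟩
  have huF : ∀ x ∈ F, B x u = 0 := (mem_filter.1 hu).2
  refine sup_le (fun x hx => ?_) ((span_singleton_le_iff_mem _ _).2 ?_)
  · intro y hy
    obtain ⟨a, ha, c, hc, rfl⟩ := Submodule.mem_sup.1 hy
    obtain ⟨k, rfl⟩ := mem_span_singleton.1 hc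
    have h1 : B a x = 0 := hF hx a ha
    have h2 : B u x = 0 := hB.isRefl _ _ (huF x hx)
    simp [h1, h2]
  · intro y hy
    obtain ⟨a, ha, c, hc, rfl⟩ := Submodule.mem_sup.1 hy
    obtain ⟨k, rfl⟩ := mem_span_singleton.1 hc
    simp [huF a ha, hB.self_eq_zero u]

open scoped Classical in
/-- The Gilbert–Varshamov argument for symplectic codes: there is an isotropic subspace of dimension
at most `r` such that at most a `2 ^ (-r)` fraction of the elements of `S` is orthogonal to it
without lying in it. -/
theorem exists_isotropic_finrank_le [Fintype V]
    {B : LinearMap.BilinForm (ZMod 2) V} (hB : B.IsAlt) (hnd : B.Nondegenerate) (S : Finset V)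
    (r : ℕ) :
    ∃ F : Submodule (ZMod 2) V, F ≤ B.orthogonal F ∧ Module.finrank (ZMod 2) F ≤ r ∧
      2 ^ r * {v ∈ S | v ∈ B.orthogonal F ∧ v ∉ F}.card ≤ S.card := by
  induction r with
  | zero => exact ⟨⊥, bot_le, by simp, by simpa using card_filter_le _ _⟩
  | succ r ih =>
    obtain ⟨F, hF, hdim, hcard⟩ := ih
    obtain ⟨u, hu, hle⟩ := exists_isotropic_sup_span_singleton hB hnd S hF
    refine ⟨_, hu, ?_, ?_⟩
    · have h1 := finrank_add_le_finrank_add_finrank F (span (ZMod 2) {u})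
      have h2 : Module.finrank (ZMod 2) (span (ZMod 2) {u}) ≤ 1 := by
        simpa using finrank_span_le_card (R := ZMod 2) ({u} : Set V)
      omega
    · rw [pow_succ, mul_assoc]
      exact (Nat.mul_le_mul_left _ hle).trans hcard

/-- If `S` has fewer than `2 ^ r` elements, some isotropic subspace of dimension at most `r` has
the property that every element of `S` orthogonal to it already lies in it. -/
theorem exists_isotropic_of_card_lt [Fintype V] {B : LinearMap.BilinForm (ZMod 2) V}
    (hB : B.IsAlt) (hnd : B.Nondegenerate) (S : Finset V) {r : ℕ} (hS : S.card < 2 ^ r) :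
    ∃ F : Submodule (ZMod 2) V, F ≤ B.orthogonal F ∧ Module.finrank (ZMod 2) F ≤ r ∧
      ∀ v ∈ S, v ∈ B.orthogonal F → v ∈ F := by
  classical
  obtain ⟨F, hF, hdim, hcard⟩ := exists_isotropic_finrank_le hB hnd S r
  refine ⟨F, hF, hdim, fun v hv hort => ?_⟩
  by_contra hvF
  have hpos : 0 < {v ∈ S | v ∈ B.orthogonal F ∧ v ∉ F}.card :=
    card_pos.2 ⟨v, mem_filter.2 ⟨hv, hort, hvF⟩⟩
  exact absurd (hcard.trans_lt hS) (not_lt.2 (Nat.le_mul_of_pos_right _ hpos))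

end LinearMap.BilinForm

namespace GaloisField

local notation "𝔽₄" => GaloisField 2 2

theorem pow_four_eq_self (x : 𝔽₄) : x ^ 4 = x := by
  have : Fintype 𝔽₄ := Fintype.ofFinite _
  have h := FiniteField.pow_card x
  rwa [← Nat.card_eq_fintype_card, GaloisField.card 2 2 two_ne_zero] at h

theorem algebraMap_trace_two_two (x : 𝔽₄) :
    algebraMap (ZMod 2) 𝔽₄ (Algebra.trace (ZMod 2) 𝔽₄ x) = x + x ^ 2 := by
  rw [FiniteField.algebraMap_trace_eq_sum_pow, GaloisField.finrank 2 two_ne_zero]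
  simp [Finset.sum_range_succ]

theorem trace_mul_sq_comm (x y : 𝔽₄) :
    Algebra.trace (ZMod 2) 𝔽₄ (x * y ^ 2) = Algebra.trace (ZMod 2) 𝔽₄ (y * x ^ 2) := by
  apply (algebraMap (ZMod 2) 𝔽₄).injective
  rw [algebraMap_trace_two_two, algebraMap_trace_two_two]
  linear_combination x ^ 2 * pow_four_eq_self y - y ^ 2 * pow_four_eq_self x

theorem trace_mul_sq_self (x : 𝔽₄) : Algebra.trace (ZMod 2) 𝔽₄ (x * x ^ 2) = 0 := by
  apply (algebraMap (ZMod 2) 𝔽₄).injective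
  rw [algebraMap_trace_two_two, map_zero]
  linear_combination x ^ 2 * pow_four_eq_self x + CharTwo.add_self_eq_zero (x ^ 3)

/-- The trace-Hermitian symplectic form `∑ⱼ Tr(xⱼ ȳⱼ)` on `𝔽₄ⁿ`. -/
noncomputable def traceHermitianForm (n : ℕ) : LinearMap.BilinForm (ZMod 2) (Fin n → 𝔽₄) :=
  LinearMap.mk₂ (ZMod 2) (fun x y => ∑ j, Algebra.trace (ZMod 2) 𝔽₄ (x j * y j ^ 2))
    (fun x x' y => by simp [add_mul, Finset.sum_add_distrib])
    (fun c x y => by simp [Finset.mul_sum])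
    (fun x y y' => by simp [CharTwo.add_sq, mul_add, Finset.sum_add_distrib])
    (fun c x y => by
      have hc : c ^ 2 = c := ZMod.pow_card c
      simp [smul_pow, hc, Finset.mul_sum])

theorem traceHermitianForm_apply (n : ℕ) (x y : Fin n → 𝔽₄) :
    traceHermitianForm n x y = ∑ j, Algebra.trace (ZMod 2) 𝔽₄ (x j * y j ^ 2) := rfl

theorem algebraMap_traceHermitianForm (n : ℕ) (x y : Fin n → 𝔽₄) :
    algebraMap (ZMod 2) 𝔽₄ (traceHermitianForm n x y) =
      ∑ j, (x j * y j ^ 2 + (x j * y j ^ 2) ^ 2) := by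
  simp_rw [traceHermitianForm_apply, map_sum, algebraMap_trace_two_two]

theorem traceHermitianForm_eq_zero_iff (n : ℕ) (x y : Fin n → 𝔽₄) :
    traceHermitianForm n x y = 0 ↔ ∑ j, (x j * y j ^ 2 + (x j * y j ^ 2) ^ 2) = 0 := by
  rw [← algebraMap_traceHermitianForm, FaithfulSMul.algebraMap_eq_zero_iff]

theorem traceHermitianForm_isAlt (n : ℕ) : (traceHermitianForm n).IsAlt := fun x => by
  simp [traceHermitianForm_apply, trace_mul_sq_self]

theorem traceHermitianForm_comm (n : ℕ) (x y : Fin n → 𝔽₄) :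
    traceHermitianForm n x y = traceHermitianForm n y x := by
  simp_rw [traceHermitianForm_apply, trace_mul_sq_comm]

theorem traceHermitianForm_nondegenerate (n : ℕ) : (traceHermitianForm n).Nondegenerate := by
  have hleft : (traceHermitianForm n).SeparatingLeft := by
    intro x hx
    funext j
    refine (traceForm_nondegenerate (ZMod 2) 𝔽₄).1 (x j) fun a => ?_
    have h := hx (Pi.single j (a ^ 2))
    rw [traceHermitianForm_apply, Finset.sum_eq_single j (fun i _ hi => by simp [hi]) (by simp),
      Pi.single_eq_same, ← pow_mul, pow_four_eq_self] at h
    exact h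
  exact ⟨hleft, fun y hy => hleft y fun x => by rw [traceHermitianForm_comm, hy x]⟩

end GaloisField

theorem one_add_three_mul_le_two_rpow {m : ℕ} (hm : 2 ≤ m) :
    1 + 3 * (2 : ℝ) ^ (-(3 * m : ℝ)) ≤ 2 ^ (2 / ((2 : ℝ) ^ m - 2)) := by
  have h4 : (4 : ℝ) ≤ 2 ^ m := by
    calc (4 : ℝ) = 2 ^ 2 := by norm_num
      _ ≤ 2 ^ m := pow_le_pow_right₀ one_le_two hm
  have hpow : (2 : ℝ) ^ (-(3 * m : ℝ)) = 1 / (2 ^ m) ^ 3 := by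
    rw [Real.rpow_neg two_pos.le, ← pow_mul, one_div, mul_comm (3 : ℝ)]
    norm_cast
  set q : ℝ := 2 ^ m
  have hexp : 1 + 2 / (q - 2) * Real.log 2 ≤ (2 : ℝ) ^ (2 / (q - 2)) := by
    rw [Real.rpow_def_of_pos two_pos, mul_comm, add_comm]
    exact Real.add_one_le_exp _
  have hlog : 1 / (q - 2) ≤ 2 / (q - 2) * Real.log 2 := by
    have h : 0 < 1 / (q - 2) := one_div_pos.2 (by linarith)
    have := Real.log_two_gt_d9
    have h2 : 2 / (q - 2) = 2 * (1 / (q - 2)) := by ring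
    nlinarith
  have hq : 3 * (1 / q ^ 3) ≤ 1 / (q - 2) := by
    rw [← mul_div_assoc, mul_one, div_le_div_iff₀ (by positivity) (by linarith)]
    nlinarith [mul_nonneg (sub_nonneg.2 h4) (sub_nonneg.2 h4)]
  rw [hpow]
  linarith

/-- Over an alphabet of size four, the Hamming ball of relative radius `δ` has at most
`2 ^ ((2 / (2 ^ m - 2) + 3 m δ) n)` elements. -/
theorem card_hammingNorm_lt_le_two_rpow {α : Type*} [Fintype α] [DecidableEq α] [Zero α]
    (hα : Fintype.card α = 4) {m : ℕ} (hm : 2 ≤ m) (n : ℕ) (δ : ℝ) :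
    (Finset.card {v : Fin n → α | (hammingNorm v : ℝ) < δ * n} : ℝ) ≤
      2 ^ ((2 / ((2 : ℝ) ^ m - 2) + 3 * m * δ) * n) := by
  have hx0 : 0 < (2 : ℝ) ^ (-(3 * m : ℝ)) := by positivity
  have hx1 : (2 : ℝ) ^ (-(3 * m : ℝ)) ≤ 1 :=
    Real.rpow_le_one_of_one_le_of_nonpos one_le_two (neg_nonpos.2 (by positivity))
  have h := card_hammingNorm_lt_mul_rpow_le (α := α) n hx0 hx1 (δ * n)
  have h3 : (Fintype.card α : ℝ) - 1 = 3 := by rw [hα]; norm_num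
  rw [h3] at h
  replace h := h.trans (pow_le_pow_left₀ (by positivity) (one_add_three_mul_le_two_rpow hm) n)
  rw [← Real.rpow_natCast, ← Real.rpow_mul two_pos.le, ← Real.rpow_mul two_pos.le,
    ← le_div_iff₀ (by positivity), ← Real.rpow_sub two_pos] at h
  refine h.trans_eq ?_
  congr 1
  ring

/-- Theorem 1 of the paper (main theorem), in symplectic-code form: for
`m ≥ 3` and `δ ∈ [δ_m, δ_{m−1}]` (with `δ₂ = 1/18` and
`δ_m = (3/5)·2^m/((2^m−2)(2^(m+1)−2))`), setting
`R(δ) = 1 − 2/(2^m−2) − (10/3)·m·δ`, there exist small symplectic codes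
`F ⊆ 𝔽₄ⁿ` of arbitrarily large length `n` with `n − dim F ≥ (R(δ) − ε)n`
and such that every `f ∈ F^ω ∖ F` has Hamming weight `≥ (δ − ε)n`.
Here `ω(x,y) = Σⱼ Tr(xⱼ ȳⱼ)` with `ȳ = y²` and `Tr z = z + z²`. -/
theorem asymptotically_good_quantum_codes
    (m : ℕ) (hm : 3 ≤ m) (δ : ℝ)
    (δlo δhi : ℝ)
    (hδlo : δlo = (3 / 5) * 2 ^ m / ((2 ^ m - 2) * (2 ^ (m + 1) - 2)))
    (hδhi : δhi = if m = 3 then 1 / 18 else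
      (3 / 5) * 2 ^ (m - 1) / ((2 ^ (m - 1) - 2) * (2 ^ m - 2)))
    (hδ : δlo ≤ δ ∧ δ ≤ δhi)
    (R : ℝ) (hR : R = 1 - 2 / (2 ^ m - 2) - (10 / 3) * m * δ) :
    ∀ ε : ℝ, 0 < ε → ∀ N : ℕ, ∃ n : ℕ, N ≤ n ∧
      ∃ F : Submodule (ZMod 2) (Fin n → GaloisField 2 2),
        (∀ x ∈ F, ∀ y ∈ F,
          ∑ j, (x j * (y j) ^ 2 + (x j * (y j) ^ 2) ^ 2) = 0) ∧
        (R - ε) * n ≤ (n : ℝ) - (Module.finrank (ZMod 2) F : ℝ) ∧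
        (∀ f : Fin n → GaloisField 2 2,
          (∀ y ∈ F, ∑ j, (f j * (y j) ^ 2 + (f j * (y j) ^ 2) ^ 2) = 0) →
          f ∉ F → (δ - ε) * n ≤ ({j | f j ≠ 0}.ncard : ℝ)) := by
  classical
  intro ε hε N
  have hm0 : (0 : ℝ) ≤ m := m.cast_nonneg
  have h8 : (8 : ℝ) ≤ 2 ^ m := by
    calc (8 : ℝ) = 2 ^ 3 := by norm_num
      _ ≤ 2 ^ m := pow_le_pow_right₀ one_le_two hm
  have hδ0 : 0 ≤ δ := by
    refine le_trans ?_ hδ.1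
    rw [hδlo, pow_succ]
    exact div_nonneg (by positivity) (mul_nonneg (by linarith) (by linarith))
  have hmδ : 0 ≤ m * δ := mul_nonneg hm0 hδ0
  have hR1 : 2 / ((2 : ℝ) ^ m - 2) + 3 * m * δ ≤ 1 - R := by rw [hR]; linarith
  have hR0 : 0 ≤ 1 - R := by
    have : 0 ≤ 2 / ((2 : ℝ) ^ m - 2) := div_nonneg two_pos.le (by linarith)
    linarith
  obtain ⟨n, hn⟩ : ∃ n : ℕ, N ≤ n ∧ 1 ≤ ε * n := by
    refine ⟨max N ⌈1 / ε⌉₊, le_max_left _ _, ?_⟩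
    rw [← div_le_iff₀' hε]
    exact (Nat.le_ceil _).trans (by exact_mod_cast le_max_right _ _)
  have : Fintype (GaloisField 2 2) := Fintype.ofFinite _
  have hcard : Fintype.card (GaloisField 2 2) = 4 := by
    rw [← Nat.card_eq_fintype_card, GaloisField.card 2 2 two_ne_zero]
    norm_num
  set r : ℕ := ⌊(1 - R) * n⌋₊ + 1
  have hr : (1 - R) * n < r := by simpa [r] using Nat.lt_floor_add_one ((1 - R) * n)
  have hr' : (r : ℝ) ≤ (1 - R) * n + 1 := by
    simpa [r] using Nat.floor_le (mul_nonneg hR0 n.cast_nonneg)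
  have hball : Finset.card {v : Fin n → GaloisField 2 2 | (hammingNorm v : ℝ) < δ * n} < 2 ^ r := by
    have h := card_hammingNorm_lt_le_two_rpow hcard (by omega : 2 ≤ m) n δ
    have hlt : (2 : ℝ) ^ ((2 / ((2 : ℝ) ^ m - 2) + 3 * m * δ) * n) < 2 ^ (r : ℝ) :=
      Real.rpow_lt_rpow_of_exponent_lt one_lt_two
        ((mul_le_mul_of_nonneg_right hR1 n.cast_nonneg).trans_lt hr)
    rw [Real.rpow_natCast] at hlt
    exact_mod_cast h.trans_lt hlt
  obtain ⟨F, hF, hdim, hmem⟩ := LinearMap.BilinForm.exists_isotropic_of_card_lt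
    (GaloisField.traceHermitianForm_isAlt n) (GaloisField.traceHermitianForm_nondegenerate n)
    _ hball
  refine ⟨n, hn.1, F, fun x hx y hy => ?_, ?_, fun f hf hfF => ?_⟩
  · exact (GaloisField.traceHermitianForm_eq_zero_iff n x y).1 (hF hy x hx)
  · have : (Module.finrank (ZMod 2) F : ℝ) ≤ r := by exact_mod_cast hdim
    linarith [hn.2]
  · have hort : f ∈ (GaloisField.traceHermitianForm n).orthogonal F := fun y hy => by
      rw [GaloisField.traceHermitianForm_comm]
      exact (GaloisField.traceHermitianForm_eq_zero_iff n f y).2 (hf y hy)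
    have hnorm : {j | f j ≠ 0}.ncard = hammingNorm f := by
      rw [Set.ncard_eq_toFinset_card']
      simp [hammingNorm]
    have hle : δ * n ≤ hammingNorm f := by
      by_contra! h
      exact hfF (hmem f (by simpa using h) hort)
    rw [hnorm]
    linarith [hn.2]
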